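/- arXiv:2303.02914 — 3 statements merged into one kernel-verified Lean document; each statement's English description precedes it below -/
import Mathlib

section
/- Suppose that a_i(t)|u|^{λ_i} ≤ (−1)^{i−1} f_i(t, u)·sign u ≤ M·a_i(t)|u|^{λ_i} for all t ≥ 0, u ∈ ℝ and i = 1,2, where λ_1, λ_2 > 0 with λ_1·λ_2 > 1, M ≥ 1, and a_1, a_2 : [0,∞) → [0,∞) are locally integrable. Suppose moreover that ∫_0^∞ (t^{n_2−1}/(n_2−1)!)·a_2(t) dt < ∞ and ∫_0^∞ (t^{n_1−1}/(n_1−1)!)·a_1(t)·[∫_t^∞ ((τ−t)^{n_2−1}/(n_2−1)!)·a_2(τ) dτ]^{λ_1} dt < ∞. Then there exist T ≥ 0, a constant K_1 > 0, and a solution (x_1, x_2) of the system x_1^{(n_1)}(t) = f_1(t, x_2(t)), x_2^{(n_2)}(t) = f_2(t, x_1(t)) on [T,∞) such that x_1(t) → K_1 and x_2(t) → 0 as t → ∞ and x_1(t) ≠ 0 for all t ≥ T; in particular the system has a non-oscillating proper solution. -/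
/-!
The system is solved backwards from infinity. With `m = n - 1`, a function
`c + (-1)^n ∫_t^∞ (τ - t)^m / m! g(τ) dτ` tends to `c` and has `n`-th derivative `g`
(`Dom.iteratedDeriv_J`, `Dom.J_tendsto_zero`), so it suffices to find a fixed point of
`Φ x = 2 ± J f₁(·, S x)`, where `S x = ± J f₂(·, x)`.

If `1 ≤ x ≤ 3`, then `|f₂(τ, x)| ≤ C₂ a₂(τ)` with `C₂ = M 3^λ₂`, hence `|S x| ≤ C₂ A`, where `A` is
the inner integral of the second finiteness condition, and
`|f₁(τ, S x)| ≤ M C₂^λ₁ a₁(τ) A(τ)^λ₁`. The finiteness conditions make both bounds integrable with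
the weight `τ^m`, and for `T` large the tail of the second one is at most `1`, so that
`1 ≤ Φ x ≤ 3`. As `n₁ ≥ 2` and `T ≥ 1`, the functions `Φ x` are Lipschitz with a common constant,
and `Φ` is continuous for pointwise convergence by dominated convergence
(`exists_integral_solution`).

As `f₁` and `f₂` are merely continuous, the fixed point comes from compactness, and Schauder's
theorem is avoided by using that `Φ x t` depends only on `x` on `(t, ∞)`. Following Tonelli, `x` is
read with an advance `δ` up to time `N` and as the constant `2` afterwards; the iterates of the
modified operator are then stationary from `N` downwards in steps of length `δ`, which gives exact
fixed points (`exists_advanced_fixedPoint`). Letting `N → ∞` and `δ → 0` along a pointwise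
convergent subsequence gives a fixed point of `Φ` (`exists_fixedPoint`).
-/

open MeasureTheory Set Filter

/-! ### The iterated-integral kernel -/

/-- The kernel `(τ - t)_+ ^ m / m!`, with value `0` for `τ ≤ t` also when `m = 0`. Integrating a
function against `kern m` inverts `m + 1` differentiations from infinity, up to sign. -/
noncomputable def kern (m : ℕ) (τ t : ℝ) : ℝ :=
  if t < τ then (τ - t) ^ m / (m.factorial : ℝ) else 0

theorem kern_nonneg (m : ℕ) (τ t : ℝ) : 0 ≤ kern m τ t := by
  unfold kern
  split_ifs with h
  · have : 0 ≤ τ - t := by linarith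
    positivity
  · exact le_rfl

theorem kern_le {m : ℕ} {τ t : ℝ} (ht : 0 ≤ t) (hτ : 0 ≤ τ) : kern m τ t ≤ τ ^ m := by
  unfold kern
  split_ifs with h
  · have h0 : 0 ≤ τ - t := by linarith
    have h1 : (1 : ℝ) ≤ m.factorial := by exact_mod_cast Nat.succ_le_of_lt (Nat.factorial_pos m)
    calc (τ - t) ^ m / (m.factorial : ℝ) ≤ (τ - t) ^ m := div_le_self (by positivity) h1
      _ ≤ τ ^ m := by gcongr; linarith
  · positivity

theorem kern_succ_eq (m : ℕ) (τ t : ℝ) :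
    kern (m + 1) τ t = (max (τ - t) 0) ^ (m + 1) / ((m + 1).factorial : ℝ) := by
  unfold kern
  split_ifs with h
  · rw [max_eq_left (by linarith)]
  · rw [max_eq_right (by linarith)]; simp

theorem kern_succ_lip {m : ℕ} {τ s t : ℝ} (hs : 0 ≤ s) (ht : 0 ≤ t) (hτ : 0 ≤ τ) :
    |kern (m + 1) τ s - kern (m + 1) τ t| ≤ τ ^ m * |s - t| := by
  rw [kern_succ_eq, kern_succ_eq, ← sub_div, abs_div, Nat.abs_cast,
    div_le_iff₀ (by exact_mod_cast Nat.factorial_pos _)]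
  have h1 := abs_pow_sub_pow_le (max (τ - s) 0) (max (τ - t) 0) (m + 1)
  have h2 : |max (τ - s) 0 - max (τ - t) 0| ≤ |s - t| := by
    refine (abs_max_sub_max_le_abs _ _ _).trans_eq ?_
    rw [abs_sub_comm s t]; congr 1; ring
  have h3 : max |max (τ - s) 0| |max (τ - t) 0| ≤ τ := by
    rw [abs_of_nonneg (le_max_right _ _), abs_of_nonneg (le_max_right _ _)]
    simp only [max_le_iff]
    refine ⟨⟨?_, ?_⟩, ?_, ?_⟩ <;> linarith
  have h4 : ((m + 1 : ℕ) : ℝ) ≤ ((m + 1).factorial : ℝ) := by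
    exact_mod_cast Nat.self_le_factorial _
  calc _ ≤ _ := h1
    _ ≤ |s - t| * ((m + 1).factorial : ℝ) * τ ^ m := by
        simp only [Nat.add_sub_cancel]
        gcongr
    _ = _ := by ring

theorem kern_measurable (m : ℕ) (t : ℝ) : Measurable fun τ => kern m τ t := by
  unfold kern
  refine Measurable.ite measurableSet_Ioi ?_ measurable_const
  fun_prop

theorem kern_succ_hasDerivAt {m : ℕ} {τ t : ℝ} (h : τ ≠ t) :
    HasDerivAt (fun s => kern (m + 1) τ s) (-kern m τ t) t := by
  rcases lt_or_gt_of_ne h with h | h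
  · have e : (fun s => kern (m + 1) τ s) =ᶠ[nhds t] fun _ => 0 := by
      filter_upwards [lt_mem_nhds h] with s hs
      unfold kern
      rw [if_neg (not_lt.2 hs.le)]
    have : kern m τ t = 0 := by unfold kern; rw [if_neg (not_lt.2 h.le)]
    rw [this, neg_zero]
    exact (hasDerivAt_const t (0 : ℝ)).congr_of_eventuallyEq e
  · have e : (fun s => kern (m + 1) τ s) =ᶠ[nhds t]
        fun s => (τ - s) ^ (m + 1) / ((m + 1).factorial : ℝ) := by
      filter_upwards [gt_mem_nhds h] with s hs
      unfold kern
      rw [if_pos hs]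
    refine HasDerivAt.congr_of_eventuallyEq ?_ e
    have := (((hasDerivAt_id t).const_sub τ).pow (m + 1)).div_const ((m + 1).factorial : ℝ)
    refine this.congr_deriv ?_
    unfold kern
    rw [if_pos h, Nat.factorial_succ]
    push_cast
    have : (m.factorial : ℝ) ≠ 0 := by exact_mod_cast (Nat.factorial_pos m).ne'
    simp only [id]
    field_simp

/-! ### The iterated integral from infinity -/

/-- The iterated integral `∫_t^∞ (τ - t)^m / m! g(τ) dτ` for `t ≥ T`, extended to `t < T` by its
value at `T`. Keeping `Ioi T` as the domain puts all dependence on `t` into the kernel. -/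
noncomputable def J (m : ℕ) (T : ℝ) (g : ℝ → ℝ) (t : ℝ) : ℝ :=
  ∫ τ in Ioi T, kern m τ (max t T) * g τ

/-- On `(T, ∞)`, `|g| ≤ b` with `∫ τ^m b(τ) dτ < ∞`: the condition under which `J m T g` is
well behaved. -/
structure Dom (m : ℕ) (T : ℝ) (g b : ℝ → ℝ) : Prop where
  meas : AEStronglyMeasurable g (volume.restrict (Ioi T))
  bmeas : AEStronglyMeasurable b (volume.restrict (Ioi T))
  le : ∀ τ ∈ Ioi T, |g τ| ≤ b τ
  int : IntegrableOn (fun τ => τ ^ m * b τ) (Ioi T)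

namespace Dom

variable {m : ℕ} {T : ℝ} {g b : ℝ → ℝ}

theorem b_nonneg (h : Dom m T g b) {τ : ℝ} (hτ : τ ∈ Ioi T) : 0 ≤ b τ :=
  (abs_nonneg _).trans (h.le τ hτ)

theorem self (h : Dom m T g b) : Dom m T b b :=
  ⟨h.bmeas, h.bmeas, fun _ hτ => (abs_of_nonneg (h.b_nonneg hτ)).le, h.int⟩

theorem of_succ (hT : 1 ≤ T) (h : Dom (m + 1) T g b) : Dom m T g b := by
  refine ⟨h.meas, h.bmeas, h.le, ?_⟩
  refine Integrable.mono' h.int ?_ ?_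
  · exact (by fun_prop : Measurable fun τ : ℝ => τ ^ m).aestronglyMeasurable.mul h.bmeas
  · filter_upwards [ae_restrict_mem measurableSet_Ioi] with τ hτ
    have hτ1 : 1 ≤ τ := hT.trans (le_of_lt hτ)
    have := h.b_nonneg hτ
    rw [Real.norm_of_nonneg (by positivity)]
    gcongr; simp

theorem of_le (hT : 1 ≤ T) {k : ℕ} (hk : k ≤ m) (h : Dom m T g b) : Dom k T g b := by
  induction hk with
  | refl => exact h
  | step _ ih => exact ih (h.of_succ hT)

theorem bound (h : Dom m T g b) (hT : 1 ≤ T) {s τ : ℝ} (hs : T ≤ s) (hτ : τ ∈ Ioi T) :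
    ‖kern m τ s * g τ‖ ≤ τ ^ m * b τ := by
  have hτ0 : 0 ≤ τ := by have : T < τ := hτ; linarith
  rw [norm_mul, Real.norm_of_nonneg (kern_nonneg _ _ _)]
  exact mul_le_mul (kern_le (by linarith) hτ0) (h.le τ hτ) (norm_nonneg _) (by positivity)

theorem kern_meas (h : Dom m T g b) (k : ℕ) (s : ℝ) :
    AEStronglyMeasurable (fun τ => kern k τ s * g τ) (volume.restrict (Ioi T)) :=
  (kern_measurable k s).aestronglyMeasurable.mul h.meas

theorem integrable (h : Dom m T g b) (hT : 1 ≤ T) {s : ℝ} (hs : T ≤ s) :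
    IntegrableOn (fun τ => kern m τ s * g τ) (Ioi T) := by
  refine Integrable.mono' h.int (h.kern_meas m s) ?_
  filter_upwards [ae_restrict_mem measurableSet_Ioi] with τ hτ using h.bound hT hs hτ

theorem abs_J_le_J (h : Dom m T g b) (hT : 1 ≤ T) (t : ℝ) : |J m T g t| ≤ J m T b t := by
  rw [← Real.norm_eq_abs]
  unfold J
  refine norm_integral_le_of_norm_le (h.self.integrable hT (le_max_right _ _)) ?_
  filter_upwards [ae_restrict_mem measurableSet_Ioi] with τ hτ
  rw [norm_mul, Real.norm_of_nonneg (kern_nonneg _ _ _)]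
  exact mul_le_mul_of_nonneg_left (h.le τ hτ) (kern_nonneg _ _ _)

theorem abs_J_le (h : Dom m T g b) (hT : 1 ≤ T) (t : ℝ) :
    |J m T g t| ≤ ∫ τ in Ioi T, τ ^ m * b τ := by
  rw [← Real.norm_eq_abs]
  unfold J
  refine norm_integral_le_of_norm_le h.int ?_
  filter_upwards [ae_restrict_mem measurableSet_Ioi] with τ hτ
    using h.bound hT (le_max_right _ _) hτ

theorem lip_aux (h : Dom (m + 1) T g b) (hT : 1 ≤ T) (s t : ℝ) {τ : ℝ} (hτ : τ ∈ Ioi T) :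
    ‖kern (m + 1) τ (max s T) * g τ - kern (m + 1) τ (max t T) * g τ‖ ≤
      (τ ^ m * b τ) * |s - t| := by
  have hτ0 : 0 ≤ τ := by have : T < τ := hτ; linarith
  have h0 : ∀ s, 0 ≤ max s T := fun s => (by linarith : 0 ≤ T).trans (le_max_right _ _)
  rw [← sub_mul, norm_mul]
  have h1 := kern_succ_lip (m := m) (h0 s) (h0 t) hτ0
  have h2 := abs_max_sub_max_le_abs s t T
  have h3 := h.le τ hτ
  have h4 := h.b_nonneg hτ
  calc _ ≤ (τ ^ m * |s - t|) * b τ := by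
        refine mul_le_mul (h1.trans ?_) h3 (norm_nonneg _) (by positivity)
        gcongr
    _ = _ := by ring

theorem J_lip (h : Dom (m + 1) T g b) (hT : 1 ≤ T) :
    LipschitzWith (∫ τ in Ioi T, τ ^ m * b τ).toNNReal (J (m + 1) T g) := by
  refine LipschitzWith.of_dist_le_mul fun s t => ?_
  rw [Real.dist_eq, Real.dist_eq]
  calc |J (m + 1) T g s - J (m + 1) T g t| ≤ ∫ τ in Ioi T, (τ ^ m * b τ) * |s - t| := by
        unfold J
        rw [← integral_sub (h.integrable hT (le_max_right _ _))
          (h.integrable hT (le_max_right _ _)), ← Real.norm_eq_abs]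
        refine norm_integral_le_of_norm_le ((h.of_succ hT).int.mul_const _) ?_
        filter_upwards [ae_restrict_mem measurableSet_Ioi] with τ hτ using h.lip_aux hT s t hτ
    _ = (∫ τ in Ioi T, τ ^ m * b τ) * |s - t| := integral_mul_const _ _
    _ ≤ _ := by
        gcongr
        exact Real.le_coe_toNNReal _

theorem J_tendsto {G : ℕ → ℝ → ℝ} (hT : 1 ≤ T) (hG : ∀ k, Dom m T (G k) b)
    (hlim : ∀ τ ∈ Ioi T, Tendsto (fun k => G k τ) atTop (nhds (g τ))) (t : ℝ) :
    Tendsto (fun k => J m T (G k) t) atTop (nhds (J m T g t)) := by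
  refine tendsto_integral_of_dominated_convergence (fun τ => τ ^ m * b τ)
    (fun k => (hG k).kern_meas m _) (hG 0).int ?_ ?_
  · intro k
    filter_upwards [ae_restrict_mem measurableSet_Ioi] with τ hτ
      using (hG k).bound hT (le_max_right _ _) hτ
  · filter_upwards [ae_restrict_mem measurableSet_Ioi] with τ hτ
      using (hlim τ hτ).const_mul _

theorem J_tendsto_zero (h : Dom m T g b) (hT : 1 ≤ T) :
    Tendsto (J m T g) atTop (nhds 0) := by
  have : Tendsto (J m T g) atTop (nhds (∫ τ in Ioi T, (0 : ℝ))) := by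
    refine tendsto_integral_filter_of_dominated_convergence (fun τ => τ ^ m * b τ)
      (Eventually.of_forall fun t => h.kern_meas m _) ?_ h.int ?_
    · refine Eventually.of_forall fun t => ?_
      filter_upwards [ae_restrict_mem measurableSet_Ioi] with τ hτ
        using h.bound hT (le_max_right _ _) hτ
    · refine Eventually.of_forall fun τ => ?_
      refine tendsto_const_nhds.congr' ?_
      filter_upwards [eventually_ge_atTop τ] with t ht
      unfold kern
      rw [if_neg (not_lt.2 (ht.trans (le_max_left _ _))), zero_mul]
  simpa using this

theorem J_succ_hasDerivAt (h : Dom (m + 1) T g b) (hT : 1 ≤ T) {t : ℝ} (ht : T < t) :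
    HasDerivAt (J (m + 1) T g) (-(J m T g t)) t := by
  have key := hasDerivAt_integral_of_dominated_loc_of_lip (𝕜 := ℝ) (μ := volume.restrict (Ioi T))
    (F := fun s τ => kern (m + 1) τ (max s T) * g τ) (F' := fun τ => -kern m τ (max t T) * g τ)
    (x₀ := t) (s := univ) (bound := fun τ => τ ^ m * b τ) univ_mem
    (Eventually.of_forall fun s => h.kern_meas _ _) (h.integrable hT (le_max_right _ _))
    ((kern_measurable m _).neg.aestronglyMeasurable.mul h.meas) ?_ (h.of_succ hT).int ?_
  · refine key.2.congr_deriv ?_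
    simp only [neg_mul, integral_neg, J]
  · filter_upwards [ae_restrict_mem measurableSet_Ioi] with τ hτ
    refine LipschitzWith.lipschitzOnWith (LipschitzWith.of_dist_le_mul fun s s' => ?_)
    have hτ0 : 0 ≤ τ := by have : T < τ := hτ; linarith
    have hb := h.b_nonneg hτ
    rw [Real.dist_eq, Real.dist_eq, Real.coe_nnabs, abs_of_nonneg (a := τ ^ m * b τ) (by positivity)]
    exact h.lip_aux hT s s' hτ
  · have : ∀ᵐ τ ∂(volume.restrict (Ioi T)), τ ≠ t :=
      ae_restrict_of_ae (by simp [ae_iff])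
    filter_upwards [this] with τ hτ
    have e : (fun s => kern (m + 1) τ (max s T) * g τ) =ᶠ[nhds t]
        fun s => kern (m + 1) τ s * g τ := by
      filter_upwards [lt_mem_nhds ht] with s hs
      rw [max_eq_left hs.le]
    rw [max_eq_left ht.le]
    exact ((kern_succ_hasDerivAt hτ).mul_const _).congr_of_eventuallyEq e

theorem J_zero_hasDerivAt (h : Dom 0 T g b) (hg : Continuous g) {t : ℝ}
    (ht : T < t) : HasDerivAt (J 0 T g) (-(g t)) t := by
  have hgi : IntegrableOn g (Ioi T) := by
    refine Integrable.mono' h.int h.meas ?_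
    filter_upwards [ae_restrict_mem measurableSet_Ioi] with τ hτ
    simpa using h.le τ hτ
  have e : J 0 T g =ᶠ[nhds t] fun s => (∫ τ in Ioi T, g τ) - ∫ τ in T..s, g τ := by
    filter_upwards [lt_mem_nhds ht] with s hs
    have e1 : J 0 T g s = ∫ τ in Ioi s, g τ := by
      unfold J
      rw [max_eq_left hs.le]
      have : ∀ τ, kern 0 τ s * g τ = (Ioi s).indicator g τ := by
        intro τ
        by_cases hτ : s < τ <;> simp [kern, indicator, hτ]
      simp_rw [this]
      rw [setIntegral_indicator measurableSet_Ioi, inter_eq_right.2 (Ioi_subset_Ioi hs.le)]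
    rw [e1, ← intervalIntegral.integral_interval_add_Ioi' (a := T) (b := s)
      (hg.intervalIntegrable _ _) (hgi.mono_set (Ioi_subset_Ioi hs.le))]
    ring
  refine HasDerivAt.congr_of_eventuallyEq ?_ e
  exact (intervalIntegral.integral_hasDerivAt_right (hg.intervalIntegrable _ _)
    hg.stronglyMeasurable.stronglyMeasurableAtFilter hg.continuousAt).const_sub _

end Dom

theorem iteratedDeriv_family {n : ℕ} {T : ℝ} {H : ℕ → ℝ → ℝ}
    (hH : ∀ k < n, ∀ t, T < t → HasDerivAt (H k) (H (k + 1) t) t) :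
    ∀ k ≤ n, ∀ t, T < t → iteratedDeriv k (H 0) t = H k t := by
  intro k
  induction k with
  | zero => intro _ t _; simp
  | succ k ih =>
    intro hk t ht
    rw [iteratedDeriv_succ]
    have e : iteratedDeriv k (H 0) =ᶠ[nhds t] H k := by
      filter_upwards [lt_mem_nhds ht] with s hs using ih (by omega) s hs
    rw [e.deriv_eq]
    exact (hH k (by omega) t ht).deriv

/-- `c + (-1)^(m+1) J m T g` solves `x^(m+1) = g` on `(T, ∞)`. -/
theorem Dom.iteratedDeriv_J {m : ℕ} {T : ℝ} {g b : ℝ → ℝ} (h : Dom m T g b) (hT : 1 ≤ T)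
    (hg : Continuous g) (c : ℝ) :
    (∀ k < m + 1, ∀ t, T < t →
      DifferentiableAt ℝ (iteratedDeriv k fun t => c + (-1) ^ (m + 1) * J m T g t) t) ∧
    (∀ t, T < t → iteratedDeriv (m + 1) (fun t => c + (-1) ^ (m + 1) * J m T g t) t = g t) := by
  let H : ℕ → ℝ → ℝ := fun k t =>
    (if k = 0 then c else 0) + (if k ≤ m then (-1) ^ (m + 1 + k) * J (m - k) T g t else g t)
  have hH : ∀ k < m + 1, ∀ t, T < t → HasDerivAt (H k) (H (k + 1) t) t := by
    intro k hk t ht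
    have hk' : k ≤ m := by omega
    simp only [H, if_pos hk']
    refine HasDerivAt.const_add _ ?_
    simp only [Nat.succ_ne_zero, if_false, zero_add]
    rcases Nat.lt_or_ge k m with hkm | hkm
    · obtain ⟨j, rfl⟩ := Nat.exists_eq_add_of_lt hkm
      rw [if_pos (by omega), show k + j + 1 - k = j + 1 by omega,
        show k + j + 1 - (k + 1) = j by omega]
      refine (((h.of_le hT (by omega : j + 1 ≤ k + j + 1)).J_succ_hasDerivAt hT ht).const_mul
        _).congr_deriv ?_
      ring
    · obtain rfl : k = m := le_antisymm hk' hkm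
      rw [if_neg (by omega), Nat.sub_self]
      refine (((h.of_le hT (Nat.zero_le k)).J_zero_hasDerivAt hg ht).const_mul _).congr_deriv ?_
      -- the exponent `k + 1 + k` is odd
      rw [show k + 1 + k = 2 * k + 1 by ring, pow_succ, pow_mul]
      simp
  have h0 : (fun t => c + (-1) ^ (m + 1) * J m T g t) = H 0 := by
    funext t; simp [H]
  have hfam := iteratedDeriv_family hH
  rw [h0]
  refine ⟨fun k hk t ht => ?_, fun t ht => ?_⟩
  · have e : iteratedDeriv k (H 0) =ᶠ[nhds t] H k := by
      filter_upwards [lt_mem_nhds ht] with s hs using hfam k hk.le s hs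
    exact e.differentiableAt_iff.2 (hH k hk t ht).differentiableAt
  · rw [hfam _ le_rfl t ht]
    simp [H]

/-! ### A fixed point theorem for operators depending on the future -/

/-- Ascoli's theorem in the form used here: equi-Lipschitz functions with values in `[1, 3]` have a
pointwise convergent subsequence. -/
theorem exists_subseq_tendsto {L : NNReal} {u : ℕ → ℝ → ℝ} (hL : ∀ k, LipschitzWith L (u k))
    (hu : ∀ k t, u k t ∈ Icc (1 : ℝ) 3) :
    ∃ (φ : ℕ → ℕ) (x : ℝ → ℝ), StrictMono φ ∧
      ∀ t, Tendsto (fun k => u (φ k) t) atTop (nhds (x t)) := by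
  have hc : IsCompact (univ.pi fun _ : ℚ => Icc (1 : ℝ) 3) :=
    isCompact_univ_pi fun _ => isCompact_Icc
  obtain ⟨a, -, φ, hφ, ha⟩ := hc.tendsto_subseq (x := fun k (q : ℚ) => u k q)
    fun k q _ => hu k q
  rw [tendsto_pi_nhds] at ha
  have hcau : ∀ t, CauchySeq fun k => u (φ k) t := by
    intro t
    rw [Metric.cauchySeq_iff]
    intro ε hε
    obtain ⟨q, hq1, hq2⟩ := exists_rat_btwn (show t < t + ε / (3 * (L + 1)) by
      have : (0 : ℝ) ≤ L := L.2
      have : 0 < ε / (3 * (L + 1)) := by positivity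
      linarith)
    have hLq : ∀ k, dist (u k t) (u k q) < ε / 3 := by
      intro k
      have hL0 : (0 : ℝ) ≤ L := L.2
      have h1 : dist t q < ε / (3 * (L + 1)) := by
        rw [dist_comm, Real.dist_eq, abs_of_pos] <;> linarith
      calc dist (u k t) (u k q) ≤ L * dist t q := (hL k).dist_le_mul _ _
        _ ≤ (L + 1) * dist t q := by gcongr; linarith
        _ < (L + 1) * (ε / (3 * (L + 1))) := by gcongr
        _ = ε / 3 := by field_simp
    obtain ⟨N, hN⟩ := Metric.cauchySeq_iff.1 (ha q).cauchySeq (ε / 3) (by positivity)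
    refine ⟨N, fun i hi j hj => ?_⟩
    have h1 := hLq (φ i)
    have h2 := hLq (φ j)
    have h3 : dist (u (φ i) q) (u (φ j) q) < ε / 3 := hN i hi j hj
    rw [dist_comm] at h2
    calc dist (u (φ i) t) (u (φ j) t)
        ≤ dist (u (φ i) t) (u (φ i) q) + dist (u (φ i) q) (u (φ j) q)
          + dist (u (φ j) q) (u (φ j) t) := dist_triangle4 _ _ _ _
      _ < ε := by linarith
  choose x hx using fun t => cauchySeq_tendsto_of_complete (hcau t)
  exact ⟨φ, x, hφ, hx⟩

/-- The measurable functions with values in `[1, 3]`. -/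
def Band : Set (ℝ → ℝ) := {x | Measurable x ∧ ∀ t, x t ∈ Icc (1 : ℝ) 3}

/-- Reading `x` with an advance `δ` up to time `N`, and the constant `2` afterwards. -/
noncomputable def advance (N δ : ℝ) (x : ℝ → ℝ) (τ : ℝ) : ℝ := if τ ≤ N then x (τ + δ) else 2

theorem advance_mem {N δ : ℝ} {x : ℝ → ℝ} (hx : x ∈ Band) : advance N δ x ∈ Band := by
  refine ⟨Measurable.ite measurableSet_Iic (hx.1.comp (measurable_add_const δ)) measurable_const,
    fun t => ?_⟩
  unfold advance
  split_ifs
  · exact hx.2 _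
  · constructor <;> norm_num

/-- Tonelli's device: with an advanced argument, iterating an operator that only looks at the
future becomes stationary after finitely many steps. -/
theorem exists_advanced_fixedPoint {T N δ : ℝ} (hδ : 0 < δ) {Φ : (ℝ → ℝ) → ℝ → ℝ}
    (hmaps : ∀ x ∈ Band, Φ x ∈ Band)
    (hfut : ∀ x ∈ Band, ∀ y ∈ Band, ∀ t, (∀ τ, max t T < τ → x τ = y τ) → Φ x t = Φ y t) :
    ∃ u ∈ Band, Φ (advance N δ u) = u := by
  let y : ℕ → ℝ → ℝ := fun k => (fun x => Φ (advance N δ x))^[k] fun _ => 2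
  have hy : ∀ k, y (k + 1) = Φ (advance N δ (y k)) := fun k =>
    Function.iterate_succ_apply' _ _ _
  have hB : ∀ k, y k ∈ Band := by
    intro k
    induction k with
    | zero => exact ⟨measurable_const, fun t => by constructor <;> norm_num [y]⟩
    | succ k ih => rw [hy]; exact hmaps _ (advance_mem ih)
  have hstab : ∀ k : ℕ, ∀ t, N - k * δ ≤ t → y (k + 2) t = y (k + 1) t := by
    intro k
    induction k with
    | zero =>
      intro t ht
      rw [congrFun (hy (0 + 1)) t, congrFun (hy 0) t]
      refine hfut _ (advance_mem (hB _)) _ (advance_mem (hB _)) t fun τ hτ => ?_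
      have : ¬ τ ≤ N := by
        have := (le_max_left t T).trans_lt hτ
        simp at ht
        linarith
      simp only [advance, if_neg this]
    | succ k ih =>
      intro t ht
      rw [congrFun (hy (k + 1 + 1)) t, congrFun (hy (k + 1)) t]
      refine hfut _ (advance_mem (hB _)) _ (advance_mem (hB _)) t fun τ hτ => ?_
      unfold advance
      split_ifs
      · refine ih _ ?_
        have := (le_max_left t T).trans_lt hτ
        push_cast at ht
        linarith
      · rfl
  obtain ⟨k, hk⟩ := exists_nat_ge ((N - T) / δ)
  rw [div_le_iff₀ hδ] at hk
  refine ⟨y (k + 2), hB _, ?_⟩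
  funext t
  rw [congrFun (hy (k + 1)) t]
  refine hfut _ (advance_mem (hB _)) _ (advance_mem (hB _)) t fun τ hτ => ?_
  unfold advance
  split_ifs
  · refine hstab k _ ?_
    have := (le_max_right t T).trans_lt hτ
    linarith
  · rfl

/-- An operator on `Band` with equi-Lipschitz values, depending only on the future of its argument
and continuous for pointwise sequential convergence, has a fixed point. -/
theorem exists_fixedPoint {T : ℝ} {L : NNReal} {Φ : (ℝ → ℝ) → ℝ → ℝ}
    (hmaps : ∀ x ∈ Band, Φ x ∈ Band) (hlip : ∀ x ∈ Band, LipschitzWith L (Φ x))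
    (hfut : ∀ x ∈ Band, ∀ y ∈ Band, ∀ t, (∀ τ, max t T < τ → x τ = y τ) → Φ x t = Φ y t)
    (hcont : ∀ (u : ℕ → ℝ → ℝ) (x : ℝ → ℝ), (∀ k, u k ∈ Band) → x ∈ Band →
      (∀ t, Tendsto (fun k => u k t) atTop (nhds (x t))) →
      ∀ t, Tendsto (fun k => Φ (u k) t) atTop (nhds (Φ x t))) :
    ∃ x ∈ Band, Φ x = x := by
  choose u huB hu using fun k : ℕ =>
    exists_advanced_fixedPoint (N := k) (Nat.one_div_pos_of_nat (α := ℝ) (n := k)) hmaps hfut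
  have huL : ∀ k, LipschitzWith L (u k) := fun k => by
    rw [← hu k]; exact hlip _ (advance_mem (huB k))
  obtain ⟨φ, x, hφ, hx⟩ := exists_subseq_tendsto huL fun k t => (huB k).2 t
  have hxB : x ∈ Band :=
    ⟨measurable_of_tendsto_metrizable (fun k => (huB (φ k)).1) (tendsto_pi_nhds.2 hx),
      fun t => isClosed_Icc.mem_of_tendsto (hx t) (Eventually.of_forall fun k => (huB _).2 t)⟩
  refine ⟨x, hxB, ?_⟩
  have hadv : ∀ t, Tendsto (fun k => advance (φ k : ℕ) (1 / ((φ k : ℕ) + 1)) (u (φ k)) t) atTop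
      (nhds (x t)) := by
    intro t
    have h1 : Tendsto (fun k => u (φ k) (t + 1 / ((φ k : ℕ) + 1)) - u (φ k) t) atTop (nhds 0) := by
      have h2 : Tendsto (fun k => (L : ℝ) * (1 / ((φ k : ℕ) + 1))) atTop (nhds 0) := by
        simpa using (tendsto_one_div_add_atTop_nhds_zero_nat.comp hφ.tendsto_atTop).const_mul
          (L : ℝ)
      refine squeeze_zero_norm (fun k => ?_) h2
      have := (huL (φ k)).dist_le_mul (t + 1 / ((φ k : ℕ) + 1)) t
      rw [Real.dist_eq, Real.dist_eq, add_sub_cancel_left,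
        abs_of_pos (a := 1 / ((φ k : ℝ) + 1)) (by positivity)] at this
      exact this
    have h3 := h1.add (hx t)
    simp only [sub_add_cancel, zero_add] at h3
    refine h3.congr' ?_
    obtain ⟨n, hn⟩ := exists_nat_ge t
    filter_upwards [hφ.tendsto_atTop.eventually_ge_atTop n] with k hk
    have : t ≤ (φ k : ℝ) := hn.trans (by exact_mod_cast hk)
    simp only [advance, if_pos this]
  funext t
  refine tendsto_nhds_unique
    (hcont _ _ (fun k => advance_mem (huB (φ k))) hxB hadv t) ?_
  simp_rw [hu]
  exact hx t

/-! ### The integral system -/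

/-- The integral form of the system: if `b₂` dominates `f₂ τ u` for `u ∈ [1, 3]`, and `b₁` dominates
`f₁ τ v` for every `v` that the resulting second component may take, with `∫ τ^m₁ b₁ ≤ 1`, then the
system has a solution with first component in `[1, 3]`. -/
theorem exists_integral_solution {p₁ p₂ : ℕ} {T : ℝ} (hT : 1 ≤ T) {f₁ f₂ : ℝ → ℝ → ℝ}
    (hf₁ : Continuous fun p : ℝ × ℝ => f₁ p.1 p.2) (hf₂ : Continuous fun p : ℝ × ℝ => f₂ p.1 p.2)
    {b₁ b₂ : ℝ → ℝ} (hb₁ : Dom (p₁ + 1) T b₁ b₁) (hb₂ : Dom (p₂ + 1) T b₂ b₂)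
    (hfb₂ : ∀ τ ∈ Ioi T, ∀ u ∈ Icc (1 : ℝ) 3, |f₂ τ u| ≤ b₂ τ)
    (hfb₁ : ∀ τ ∈ Ioi T, ∀ v, |v| ≤ J (p₂ + 1) T b₂ τ → |f₁ τ v| ≤ b₁ τ)
    (hsmall : ∫ τ in Ioi T, τ ^ (p₁ + 1) * b₁ τ ≤ 1) :
    ∃ x y : ℝ → ℝ, Continuous x ∧ Continuous y ∧ (∀ t, x t ∈ Icc (1 : ℝ) 3) ∧
      Dom (p₁ + 1) T (fun τ => f₁ τ (y τ)) b₁ ∧ Dom (p₂ + 1) T (fun τ => f₂ τ (x τ)) b₂ ∧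
      x = (fun t => 2 + (-1) ^ (p₁ + 1 + 1) * J (p₁ + 1) T (fun τ => f₁ τ (y τ)) t) ∧
      y = (fun t => 0 + (-1) ^ (p₂ + 1 + 1) * J (p₂ + 1) T (fun τ => f₂ τ (x τ)) t) := by
  let S : (ℝ → ℝ) → ℝ → ℝ := fun x t =>
    0 + (-1) ^ (p₂ + 1 + 1) * J (p₂ + 1) T (fun τ => f₂ τ (x τ)) t
  let Φ : (ℝ → ℝ) → ℝ → ℝ := fun x t =>
    2 + (-1) ^ (p₁ + 1 + 1) * J (p₁ + 1) T (fun τ => f₁ τ (S x τ)) t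
  have hD₂ : ∀ x ∈ Band, Dom (p₂ + 1) T (fun τ => f₂ τ (x τ)) b₂ := fun x hx =>
    ⟨(hf₂.measurable.comp (measurable_id.prodMk hx.1)).aestronglyMeasurable, hb₂.bmeas,
      fun τ hτ => hfb₂ τ hτ _ (hx.2 τ), hb₂.int⟩
  have hScont : ∀ x ∈ Band, Continuous (S x) := fun x hx =>
    continuous_const.add (continuous_const.mul ((hD₂ x hx).J_lip hT).continuous)
  have habs : ∀ (k : ℕ) (r : ℝ), |(-1) ^ k * r| = |r| := fun k r => by
    rw [abs_mul, abs_pow, abs_neg, abs_one, one_pow, one_mul]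
  have hSb : ∀ x ∈ Band, ∀ t, |S x t| ≤ J (p₂ + 1) T b₂ t := fun x hx t => by
    simp only [S, zero_add]
    rw [habs]
    exact (hD₂ x hx).abs_J_le_J hT t
  have hD₁ : ∀ x ∈ Band, Dom (p₁ + 1) T (fun τ => f₁ τ (S x τ)) b₁ := fun x hx =>
    ⟨(hf₁.comp (continuous_id.prodMk (hScont x hx))).aestronglyMeasurable, hb₁.bmeas,
      fun τ hτ => hfb₁ τ hτ _ (hSb x hx τ), hb₁.int⟩
  have hlip : ∀ x ∈ Band, LipschitzWith (∫ τ in Ioi T, τ ^ p₁ * b₁ τ).toNNReal (Φ x) := by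
    intro x hx
    refine LipschitzWith.of_dist_le_mul fun s t => ?_
    refine le_trans (le_of_eq ?_) (((hD₁ x hx).J_lip hT).dist_le_mul s t)
    simp only [Φ, Real.dist_eq]
    rw [add_sub_add_left_eq_sub, ← mul_sub, habs]
  have hmaps : ∀ x ∈ Band, Φ x ∈ Band := by
    intro x hx
    refine ⟨(hlip x hx).continuous.measurable, fun t => ?_⟩
    have h1 : |(-1) ^ (p₁ + 1 + 1) * J (p₁ + 1) T (fun τ => f₁ τ (S x τ)) t| ≤ 1 := by
      rw [habs]
      exact ((hD₁ x hx).abs_J_le hT t).trans hsmall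
    have h2 := abs_le.1 h1
    constructor <;> simp only [Φ] <;> linarith [h2.1, h2.2]
  -- the kernel vanishes on the past, so both integrals depend only on the future
  have hJfut : ∀ (m : ℕ) (g h : ℝ → ℝ) (t : ℝ), (∀ τ, max t T < τ → g τ = h τ) →
      J m T g t = J m T h t := by
    intro m g h t hgh
    unfold J
    congr 1
    funext τ
    by_cases hτ : max t T < τ
    · rw [hgh τ hτ]
    · simp [kern, hτ]
  have hfut : ∀ x ∈ Band, ∀ y ∈ Band, ∀ t, (∀ τ, max t T < τ → x τ = y τ) → Φ x t = Φ y t := by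
    intro x _ y _ t hxy
    have hS : ∀ τ, max t T < τ → S x τ = S y τ := by
      intro τ hτ
      simp only [S]
      rw [hJfut _ _ (fun τ => f₂ τ (y τ)) τ fun σ hσ => by
        rw [hxy σ (hτ.trans ((le_max_left _ _).trans_lt hσ))]]
    simp only [Φ]
    rw [hJfut _ _ (fun τ => f₁ τ (S y τ)) t fun σ hσ => by rw [hS σ hσ]]
  have hcont : ∀ (u : ℕ → ℝ → ℝ) (x : ℝ → ℝ), (∀ k, u k ∈ Band) → x ∈ Band →
      (∀ t, Tendsto (fun k => u k t) atTop (nhds (x t))) →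
      ∀ t, Tendsto (fun k => Φ (u k) t) atTop (nhds (Φ x t)) := by
    intro u x hu _ hux t
    have hS : ∀ t, Tendsto (fun k => S (u k) t) atTop (nhds (S x t)) := fun t =>
      ((Dom.J_tendsto hT (fun k => hD₂ _ (hu k)) (fun τ _ =>
        (hf₂.tendsto (τ, x τ)).comp (tendsto_const_nhds.prodMk_nhds (hux τ))) t).const_mul
        _).const_add _
    exact ((Dom.J_tendsto hT (fun k => hD₁ _ (hu k)) (fun τ _ =>
      (hf₁.tendsto (τ, S x τ)).comp (tendsto_const_nhds.prodMk_nhds (hS τ))) t).const_mul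
      _).const_add _
  obtain ⟨x, hx, hfix⟩ := exists_fixedPoint hmaps hlip hfut hcont
  refine ⟨x, S x, ?_, hScont x hx, hx.2, hD₁ x hx, hD₂ x hx, hfix.symm, rfl⟩
  rw [← hfix]
  exact (hlip x hx).continuous

/-! ### From the hypotheses to the integral system -/

/-- The sign condition says nothing about `φ 0`; the bound there follows by continuity. -/
theorem abs_le_of_sign {φ : ℝ → ℝ} (hφ : Continuous φ) {C lam : ℝ} (hlam : 0 < lam)
    (h : ∀ u, 0 ≤ φ u * Real.sign u ∧ φ u * Real.sign u ≤ C * |u| ^ lam) (u : ℝ) :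
    |φ u| ≤ C * |u| ^ lam := by
  have hcl : IsClosed {u | |φ u| ≤ C * |u| ^ lam} :=
    isClosed_le hφ.abs (continuous_const.mul (continuous_abs.rpow_const fun _ => Or.inr hlam.le))
  have hsub : ({0}ᶜ : Set ℝ) ⊆ {u | |φ u| ≤ C * |u| ^ lam} := by
    intro u hu
    have h1 : |φ u| = |φ u * Real.sign u| := by
      rcases Real.sign_apply_eq_of_ne_zero u hu with h | h <;> simp [h]
    rw [mem_ofPred_eq, h1, abs_of_nonneg (h u).1]
    exact (h u).2
  have := hcl.closure_subset_iff.2 hsub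
  rw [(dense_compl_singleton (0 : ℝ)).closure_eq] at this
  exact this (mem_univ u)

theorem exists_tail_le {g : ℝ → ℝ} (hg : IntegrableOn g (Ioi 1)) {ε : ℝ} (hε : 0 < ε) :
    ∃ T, 1 ≤ T ∧ ∫ τ in Ioi T, g τ ≤ ε := by
  have h1 := intervalIntegral_tendsto_integral_Ioi 1 hg tendsto_id
  have h2 := h1.eventually (lt_mem_nhds (show (∫ τ in Ioi 1, g τ) - ε < ∫ τ in Ioi 1, g τ by
    linarith))
  obtain ⟨T, hT, hT1⟩ := (h2.and (eventually_ge_atTop 1)).exists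
  refine ⟨T, hT1, ?_⟩
  have h3 := intervalIntegral.integral_interval_add_Ioi hg
    (hg.mono_set (Ioi_subset_Ioi hT1))
  simp only [id] at hT
  linarith

theorem J_eq_integral {m : ℕ} {T t : ℝ} (g : ℝ → ℝ) (ht : T ≤ t) :
    J m T g t = ∫ τ in Ioi t, (τ - t) ^ m / (m.factorial : ℝ) * g τ := by
  unfold J
  rw [max_eq_left ht]
  have : ∀ τ, kern m τ t * g τ =
      (Ioi t).indicator (fun τ => (τ - t) ^ m / (m.factorial : ℝ) * g τ) τ := by
    intro τ
    by_cases hτ : t < τ <;> simp [kern, indicator, hτ]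
  simp_rw [this]
  rw [setIntegral_indicator measurableSet_Ioi, inter_eq_right.2 (Ioi_subset_Ioi ht)]

/-- Passing from a finite lower integral with the weight `t ^ m / m!` to integrability with the
weight `t ^ m`. -/
theorem integrableOn_of_lintegral {m : ℕ} {g : ℝ → ℝ} (hg : ∀ t ∈ Ioi (1 : ℝ), 0 ≤ g t)
    (hm : AEStronglyMeasurable g (volume.restrict (Ioi 1)))
    (h : ∫⁻ t in Ioi (0 : ℝ), ENNReal.ofReal (t ^ m / (m.factorial : ℝ) * g t) < ⊤) :
    IntegrableOn (fun t => t ^ m * g t) (Ioi 1) := by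
  have h1 : IntegrableOn (fun t => t ^ m / (m.factorial : ℝ) * g t) (Ioi 1) := by
    refine ⟨(by fun_prop : Measurable fun t : ℝ =>
      t ^ m / (m.factorial : ℝ)).aestronglyMeasurable.mul hm, ?_⟩
    rw [hasFiniteIntegral_iff_ofReal]
    · exact (lintegral_mono_set (Ioi_subset_Ioi zero_le_one)).trans_lt h
    · filter_upwards [ae_restrict_mem measurableSet_Ioi] with t ht
      have h0 : (0 : ℝ) ≤ t := zero_le_one.trans (le_of_lt ht)
      have := hg t ht
      simp only [Pi.zero_apply]
      positivity
  refine (h1.const_mul (m.factorial : ℝ)).congr (Eventually.of_forall fun t => ?_)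
  have : (m.factorial : ℝ) ≠ 0 := by exact_mod_cast (Nat.factorial_pos m).ne'
  simp only
  field_simp



/-- necessity part of Theorem 2. Under the two-sided sign conditions and
finiteness of both integral conditions, the system has a solution `(x₁, x₂)` on some `[T, ∞)`
with `x₁(t) → K₁ > 0`, `x₂(t) → 0` as `t → ∞` and `x₁(t) ≠ 0` for `t ≥ T`; in particular it is a
non-oscillating proper solution. -/
theorem exists_nonoscillating_solution
    (n₁ n₂ : ℕ) (hn₁ : 2 ≤ n₁) (hn₂ : 2 ≤ n₂)
    (f₁ f₂ : ℝ → ℝ → ℝ)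
    (hf₁ : ContinuousOn (fun p : ℝ × ℝ => f₁ p.1 p.2) (Ici 0 ×ˢ univ))
    (hf₂ : ContinuousOn (fun p : ℝ × ℝ => f₂ p.1 p.2) (Ici 0 ×ˢ univ))
    (lam₁ lam₂ : ℝ) (hlam₁ : 0 < lam₁) (hlam₂ : 0 < lam₂) (hlam : 1 < lam₁ * lam₂)
    (M : ℝ) (hM : 1 ≤ M)
    (a₁ a₂ : ℝ → ℝ)
    (ha₁ : ∀ t ∈ Ici (0:ℝ), 0 ≤ a₁ t) (ha₂ : ∀ t ∈ Ici (0:ℝ), 0 ≤ a₂ t)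
    (ha₁int : LocallyIntegrableOn a₁ (Ici 0))
    (ha₂int : LocallyIntegrableOn a₂ (Ici 0))
    (hsign₁ : ∀ t ∈ Ici (0:ℝ), ∀ u : ℝ,
      a₁ t * |u| ^ lam₁ ≤ f₁ t u * Real.sign u ∧
      f₁ t u * Real.sign u ≤ M * (a₁ t * |u| ^ lam₁))
    (hsign₂ : ∀ t ∈ Ici (0:ℝ), ∀ u : ℝ,
      a₂ t * |u| ^ lam₂ ≤ -(f₂ t u * Real.sign u) ∧
      -(f₂ t u * Real.sign u) ≤ M * (a₂ t * |u| ^ lam₂))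
    -- condition (5): `∫_0^∞ (t^{n₂−1}/(n₂−1)!) a₂(t) dt < ∞`
    (hfin₂ : ∫⁻ t in Ioi (0:ℝ),
        ENNReal.ofReal (t ^ (n₂ - 1) / ((n₂ - 1).factorial : ℝ) * a₂ t) < ⊤)
    -- negation of condition (6): the iterated integral is finite
    (hfin : ∫⁻ t in Ioi (0:ℝ),
        ENNReal.ofReal (t ^ (n₁ - 1) / ((n₁ - 1).factorial : ℝ) * a₁ t *
          (∫ τ in Ioi t, (τ - t) ^ (n₂ - 1) / ((n₂ - 1).factorial : ℝ) * a₂ τ) ^ lam₁) < ⊤) :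
    ∃ (T K₁ : ℝ) (x₁ x₂ : ℝ → ℝ), 0 ≤ T ∧ 0 < K₁ ∧
      (∀ k < n₁, ∀ t ∈ Ici T, DifferentiableAt ℝ (iteratedDeriv k x₁) t) ∧
      (∀ k < n₂, ∀ t ∈ Ici T, DifferentiableAt ℝ (iteratedDeriv k x₂) t) ∧
      (∀ t ∈ Ici T, iteratedDeriv n₁ x₁ t = f₁ t (x₂ t)) ∧
      (∀ t ∈ Ici T, iteratedDeriv n₂ x₂ t = f₂ t (x₁ t)) ∧
      Tendsto x₁ atTop (nhds K₁) ∧ Tendsto x₂ atTop (nhds 0) ∧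
      (∀ t ∈ Ici T, x₁ t ≠ 0) ∧
      (∀ t ∈ Ici T, ∃ τ, t ≤ τ ∧ 0 < |x₁ τ| + |x₂ τ|) := by

  obtain ⟨p₁, rfl⟩ : ∃ p, n₁ = p + 1 + 1 := ⟨n₁ - 2, by omega⟩
  obtain ⟨p₂, rfl⟩ : ∃ p, n₂ = p + 1 + 1 := ⟨n₂ - 2, by omega⟩
  simp only [Nat.add_sub_cancel] at hfin₂ hfin
  set A : ℝ → ℝ := fun t =>
    ∫ τ in Ioi t, (τ - t) ^ (p₂ + 1) / ((p₂ + 1).factorial : ℝ) * a₂ τ with hA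
  have hM0 : 0 ≤ M := by linarith
  have hsub : Ioi (1 : ℝ) ⊆ Ici 0 := fun t ht =>
    mem_Ici.2 (zero_le_one.trans (le_of_lt ht))
  have ham₁ : AEStronglyMeasurable a₁ (volume.restrict (Ioi 1)) :=
    ha₁int.aestronglyMeasurable.mono_set hsub
  have ham₂ : AEStronglyMeasurable a₂ (volume.restrict (Ioi 1)) :=
    ha₂int.aestronglyMeasurable.mono_set hsub
  have hDa₂ : Dom (p₂ + 1) 1 a₂ a₂ :=
    ⟨ham₂, ham₂, fun τ hτ => (abs_of_nonneg (ha₂ τ (hsub hτ))).le,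
      integrableOn_of_lintegral (fun τ hτ => ha₂ τ (hsub hτ)) ham₂ hfin₂⟩
  have hA0 : ∀ t, 0 ≤ t → 0 ≤ A t := by
    intro t ht
    refine setIntegral_nonneg measurableSet_Ioi fun τ hτ => ?_
    have hτ' : t < τ := hτ
    have h1 := ha₂ τ (ht.trans hτ'.le)
    have h2 : 0 ≤ τ - t := by linarith
    positivity
  have hAm : AEStronglyMeasurable A (volume.restrict (Ioi 1)) := by
    refine (hDa₂.J_lip le_rfl).continuous.aestronglyMeasurable.congr ?_
    filter_upwards [ae_restrict_mem measurableSet_Ioi] with t ht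
    exact J_eq_integral a₂ (le_of_lt ht)
  have hAl : AEStronglyMeasurable (fun t => A t ^ lam₁) (volume.restrict (Ioi 1)) :=
    (hAm.aemeasurable.pow_const lam₁).aestronglyMeasurable
  set C₂ : ℝ := M * 3 ^ lam₂ with hC₂
  have hC₂0 : 0 ≤ C₂ := by positivity
  set b₂ : ℝ → ℝ := fun t => C₂ * a₂ t with hb₂
  set b₁ : ℝ → ℝ := fun t => M * C₂ ^ lam₁ * (a₁ t * A t ^ lam₁) with hb₁
  have hb₁0 : ∀ t ∈ Ioi (1 : ℝ), 0 ≤ b₁ t := fun t ht => by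
    have h1 := ha₁ t (hsub ht)
    have h2 := hA0 t (hsub ht)
    simp only [hb₁]
    positivity
  have hb₁int : IntegrableOn (fun t => t ^ (p₁ + 1) * b₁ t) (Ioi 1) := by
    have h1 : IntegrableOn (fun t => t ^ (p₁ + 1) * (a₁ t * A t ^ lam₁)) (Ioi 1) := by
      refine integrableOn_of_lintegral (fun t ht => ?_) (ham₁.mul hAl) ?_
      · exact mul_nonneg (ha₁ t (hsub ht)) (Real.rpow_nonneg (hA0 t (hsub ht)) _)
      · simpa only [mul_assoc] using hfin
    refine (h1.const_mul (M * C₂ ^ lam₁)).congr (Eventually.of_forall fun t => ?_)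
    simp only [hb₁]
    ring
  obtain ⟨T, hT, hsmall⟩ := exists_tail_le hb₁int one_pos
  have hT0 : 0 ≤ T := by linarith
  have hsubT : Ioi T ⊆ Ioi 1 := Ioi_subset_Ioi hT
  have hbm₁ : AEStronglyMeasurable b₁ (volume.restrict (Ioi T)) :=
    ((ham₁.mul hAl).const_mul (M * C₂ ^ lam₁)).mono_set hsubT
  have hbm₂ : AEStronglyMeasurable b₂ (volume.restrict (Ioi T)) :=
    (ham₂.const_mul C₂).mono_set hsubT
  have hD₁ : Dom (p₁ + 1) T b₁ b₁ :=
    ⟨hbm₁, hbm₁, fun τ hτ => (abs_of_nonneg (hb₁0 τ (hsubT hτ))).le, hb₁int.mono_set hsubT⟩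
  have hD₂ : Dom (p₂ + 1) T b₂ b₂ := by
    refine ⟨hbm₂, hbm₂, fun τ hτ => (abs_of_nonneg
      (mul_nonneg hC₂0 (ha₂ τ (hsub (hsubT hτ))))).le, ?_⟩
    refine ((hDa₂.int.mono_set hsubT).const_mul C₂).congr (Eventually.of_forall fun t => ?_)
    simp only [hb₂]
    ring
  -- freezing the time variable below `0` makes the right-hand sides globally continuous
  have hext : ∀ {f : ℝ → ℝ → ℝ}, ContinuousOn (fun p : ℝ × ℝ => f p.1 p.2) (Ici 0 ×ˢ univ) →
      Continuous fun p : ℝ × ℝ => f (max p.1 0) p.2 := by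
    intro f hf
    exact hf.comp_continuous (f := fun p : ℝ × ℝ => (max p.1 0, p.2)) (by fun_prop)
      fun p => ⟨mem_Ici.2 (le_max_right _ _), mem_univ _⟩
  have hg₁ := hext hf₁
  have hg₂ := hext hf₂
  have habs₁ : ∀ t, 0 ≤ t → ∀ u, |f₁ t u| ≤ M * a₁ t * |u| ^ lam₁ := by
    intro t ht
    refine abs_le_of_sign ?_ hlam₁ fun u => ⟨?_, ?_⟩
    · simpa [Function.comp_def, max_eq_left ht] using hg₁.comp
        (continuous_const.prodMk continuous_id : Continuous fun u : ℝ => (t, u))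
    · exact (mul_nonneg (ha₁ t ht) (by positivity)).trans (hsign₁ t ht u).1
    · rw [mul_assoc]; exact (hsign₁ t ht u).2
  have habs₂ : ∀ t, 0 ≤ t → ∀ u, |f₂ t u| ≤ M * a₂ t * |u| ^ lam₂ := by
    intro t ht u
    rw [← abs_neg]
    refine abs_le_of_sign (φ := fun u => -f₂ t u) ?_ hlam₂ (fun u => ⟨?_, ?_⟩) u
    · refine Continuous.neg ?_
      simpa [Function.comp_def, max_eq_left ht] using hg₂.comp
        (continuous_const.prodMk continuous_id : Continuous fun u : ℝ => (t, u))
    · rw [neg_mul]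
      exact (mul_nonneg (ha₂ t ht) (by positivity)).trans (hsign₂ t ht u).1
    · rw [mul_assoc, neg_mul]; exact (hsign₂ t ht u).2
  have hJb₂ : ∀ t, T ≤ t → J (p₂ + 1) T b₂ t = C₂ * A t := by
    intro t ht
    rw [J_eq_integral _ ht, hA, ← integral_const_mul]
    congr 1
    funext τ
    simp only [hb₂]
    ring
  obtain ⟨x, y, hxc, hyc, hx, hDx, hDy, hxe, hye⟩ := exists_integral_solution hT
    (f₁ := fun t u => f₁ (max t 0) u) (f₂ := fun t u => f₂ (max t 0) u) hg₁ hg₂ hD₁ hD₂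
    (by
      intro τ hτ u hu
      have h0 : 0 ≤ τ := hT0.trans (le_of_lt hτ)
      have h1 := ha₂ τ h0
      simp only [max_eq_left h0]
      calc |f₂ τ u| ≤ M * a₂ τ * |u| ^ lam₂ := habs₂ τ h0 u
        _ ≤ M * a₂ τ * 3 ^ lam₂ := by
            gcongr
            rw [abs_of_nonneg (zero_le_one.trans hu.1)]
            exact hu.2
        _ = b₂ τ := by simp only [hb₂, hC₂]; ring)
    (by
      intro τ hτ v hv
      have h0 : 0 ≤ τ := hT0.trans (le_of_lt hτ)
      have h1 := ha₁ τ h0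
      rw [hJb₂ τ (le_of_lt hτ)] at hv
      simp only [max_eq_left h0]
      calc |f₁ τ v| ≤ M * a₁ τ * |v| ^ lam₁ := habs₁ τ h0 v
        _ ≤ M * a₁ τ * (C₂ * A τ) ^ lam₁ := by gcongr
        _ = b₁ τ := by
            rw [Real.mul_rpow hC₂0 (hA0 τ h0)]
            simp only [hb₁]
            ring)
    hsmall
  have hsx := hDx.iteratedDeriv_J hT (hg₁.comp (continuous_id.prodMk hyc)) 2
  have hsy := hDy.iteratedDeriv_J hT (hg₂.comp (continuous_id.prodMk hxc)) 0
  rw [← hxe] at hsx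
  rw [← hye] at hsy
  have hlt : ∀ t ∈ Ici (T + 1), T < t := fun t ht => by
    have : T + 1 ≤ t := ht
    linarith
  -- starting at `T + 1` gives two-sided derivatives at the left end point
  refine ⟨T + 1, 2, x, y, by linarith, two_pos, fun k hk t ht => hsx.1 k hk t (hlt t ht),
    fun k hk t ht => hsy.1 k hk t (hlt t ht), fun t ht => ?_, fun t ht => ?_, ?_, ?_,
    fun t _ => (zero_lt_one.trans_le (hx t).1).ne', fun t _ => ⟨t, le_rfl, ?_⟩⟩
  · rw [hsx.2 t (hlt t ht), max_eq_left (hT0.trans (hlt t ht).le)]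
  · rw [hsy.2 t (hlt t ht), max_eq_left (hT0.trans (hlt t ht).le)]
  · rw [hxe]
    simpa using ((hDx.J_tendsto_zero hT).const_mul ((-1) ^ (p₁ + 1 + 1))).const_add 2
  · rw [hye]
    simpa using ((hDy.J_tendsto_zero hT).const_mul ((-1) ^ (p₂ + 1 + 1))).const_add 0
  · have h1 : 0 < |x t| := abs_pos.2 (zero_lt_one.trans_le (hx t).1).ne'
    have h2 := abs_nonneg (y t)
    linarith
end

section
/- Suppose that (−1)^{i−1} f_i(t, u)·sign u ≥ a_i(t)|u|^{λ_i} for all t ≥ 0, u ∈ ℝ and i = 1,2, where λ_1, λ_2 > 0 and a_1, a_2 : [0,∞) → (0,∞) are locally integrable with a_1(t) > 0 for all t. Then the system x_1^{(n_1)}(t) = f_1(t, x_2(t)), x_2^{(n_2)}(t) = f_2(t, x_1(t)) has no weakly oscillating proper solution; that is, if (x_1, x_2) is a proper solution in which x_1 has arbitrarily large zeros, then x_2 also has arbitrarily large zeros, so every weakly oscillating proper solution pair is in fact oscillating. -/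
/-!
If one component, say `x₂`, has no zeros beyond some `T`, then the sign condition makes
`f₁ t (x₂ t)`, i.e. the `n₁`-th derivative of `x₁`, nonzero for all large `t`. By Rolle's theorem a
function whose derivative is nonzero on a half-line has at most one zero there
(`eventually_ne_zero_of_deriv`). Descending through the derivatives, `x₁` itself is eventually
nonzero (`eventually_ne_zero_of_iteratedDeriv`). So zeros of `x₁` at arbitrarily large times force
the same for `x₂`, and symmetrically.
-/

open MeasureTheory Set Filter

theorem eventually_ne_zero_of_deriv (g : ℝ → ℝ)
    (hg : ∀ᶠ t in atTop, DifferentiableAt ℝ g t)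
    (hd : ∀ᶠ t in atTop, deriv g t ≠ 0) :
    ∀ᶠ t in atTop, g t ≠ 0 := by
  obtain ⟨T, hT⟩ := eventually_atTop.1 (hg.and hd)
  by_cases hz : ∃ z, T ≤ z ∧ g z = 0
  · obtain ⟨z, hTz, hgz⟩ := hz
    filter_upwards [eventually_gt_atTop z] with t hzt hgt
    obtain ⟨c, hc, hc0⟩ := exists_deriv_eq_zero hzt
      (fun s hs => (hT s (hTz.trans hs.1)).1.continuousAt.continuousWithinAt)
      (hgz.trans hgt.symm)
    exact (hT c (hTz.trans hc.1.le)).2 hc0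
  · filter_upwards [eventually_ge_atTop T] with t ht hgt
    exact hz ⟨t, ht, hgt⟩

theorem eventually_ne_zero_of_iteratedDeriv (n : ℕ) (x : ℝ → ℝ)
    (hx : ∀ k < n, ∀ᶠ t in atTop, DifferentiableAt ℝ (iteratedDeriv k x) t)
    (hn : ∀ᶠ t in atTop, iteratedDeriv n x t ≠ 0) :
    ∀ᶠ t in atTop, x t ≠ 0 := by
  induction n with
  | zero => simpa using hn
  | succ n ih =>
    refine ih (fun k hk => hx k (hk.trans n.lt_succ_self)) ?_
    refine eventually_ne_zero_of_deriv _ (hx n n.lt_succ_self) ?_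
    simpa only [iteratedDeriv_succ] using hn

/-- One half of the alternative. The product `f t u * sign u` enters only through its absolute
value, so that both signs in the system are covered. -/
theorem zeros_of_zeros (n : ℕ) (f : ℝ → ℝ → ℝ) (lam : ℝ) (a : ℝ → ℝ)
    (ha : ∀ t ∈ Ici (0:ℝ), 0 < a t)
    (hsign : ∀ t ∈ Ici (0:ℝ), ∀ u : ℝ, a t * |u| ^ lam ≤ |f t u * Real.sign u|)
    (x y : ℝ → ℝ) (t₀ : ℝ) (ht₀ : 0 ≤ t₀)
    (hsmooth : ∀ k < n, ∀ t ∈ Ici t₀, DifferentiableAt ℝ (iteratedDeriv k x) t)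
    (heq : ∀ t ∈ Ici t₀, iteratedDeriv n x t = f t (y t))
    (hx : ∀ T : ℝ, ∃ t, T ≤ t ∧ x t = 0) :
    ∀ T : ℝ, ∃ t, T ≤ t ∧ y t = 0 := by
  by_contra! hy
  obtain ⟨T, hT⟩ := hy
  have hne : ∀ᶠ t in atTop, x t ≠ 0 := by
    refine eventually_ne_zero_of_iteratedDeriv n x (fun k hk => ?_) ?_
    · filter_upwards [eventually_ge_atTop t₀] with t ht using hsmooth k hk t ht
    · filter_upwards [eventually_ge_atTop t₀, eventually_ge_atTop T] with t ht htT h0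
      have h0t : t ∈ Ici (0:ℝ) := ht₀.trans ht
      have hpos : 0 < a t * |y t| ^ lam :=
        mul_pos (ha t h0t) (Real.rpow_pos_of_pos (abs_pos.2 (hT t htT)) _)
      have hle := hsign t h0t (y t)
      rw [← heq t ht, h0, zero_mul, abs_zero] at hle
      exact hpos.not_ge hle
  obtain ⟨S, hS⟩ := eventually_atTop.1 hne
  obtain ⟨t, ht, hxt⟩ := hx S
  exact hS t ht hxt

/-- Under the sign conditions with positive coefficient functions, the system
has no weakly oscillating proper solution: if one component of a proper solution has arbitrarily
large zeros, then so does the other, i.e. every weakly oscillating proper solution pair is in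
fact oscillating. -/
theorem weakly_oscillating_is_oscillating
    (n₁ n₂ : ℕ) (hn₁ : 2 ≤ n₁) (hn₂ : 2 ≤ n₂)
    (f₁ f₂ : ℝ → ℝ → ℝ)
    (hf₁ : ContinuousOn (fun p : ℝ × ℝ => f₁ p.1 p.2) (Ici 0 ×ˢ univ))
    (hf₂ : ContinuousOn (fun p : ℝ × ℝ => f₂ p.1 p.2) (Ici 0 ×ˢ univ))
    (lam₁ lam₂ : ℝ) (hlam₁ : 0 < lam₁) (hlam₂ : 0 < lam₂)
    (a₁ a₂ : ℝ → ℝ)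
    (ha₁ : ∀ t ∈ Ici (0:ℝ), 0 < a₁ t) (ha₂ : ∀ t ∈ Ici (0:ℝ), 0 < a₂ t)
    (ha₁int : LocallyIntegrableOn a₁ (Ici 0))
    (ha₂int : LocallyIntegrableOn a₂ (Ici 0))
    (hsign₁ : ∀ t ∈ Ici (0:ℝ), ∀ u : ℝ, a₁ t * |u| ^ lam₁ ≤ f₁ t u * Real.sign u)
    (hsign₂ : ∀ t ∈ Ici (0:ℝ), ∀ u : ℝ, a₂ t * |u| ^ lam₂ ≤ -(f₂ t u * Real.sign u))
    -- a proper solution on `[t₀, ∞)`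
    (x₁ x₂ : ℝ → ℝ) (t₀ : ℝ) (ht₀ : 0 ≤ t₀)
    (hsmooth₁ : ∀ k < n₁, ∀ t ∈ Ici t₀, DifferentiableAt ℝ (iteratedDeriv k x₁) t)
    (hsmooth₂ : ∀ k < n₂, ∀ t ∈ Ici t₀, DifferentiableAt ℝ (iteratedDeriv k x₂) t)
    (heq₁ : ∀ t ∈ Ici t₀, iteratedDeriv n₁ x₁ t = f₁ t (x₂ t))
    (heq₂ : ∀ t ∈ Ici t₀, iteratedDeriv n₂ x₂ t = f₂ t (x₁ t))
    (hproper : ∀ t ∈ Ici t₀, ∃ τ, t ≤ τ ∧ 0 < |x₁ τ| + |x₂ τ|)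
    -- weakly oscillating: at least one component has arbitrarily large zeros
    (hweak : (∀ T : ℝ, ∃ t, T ≤ t ∧ x₁ t = 0) ∨ (∀ T : ℝ, ∃ t, T ≤ t ∧ x₂ t = 0)) :
    (∀ T : ℝ, ∃ t, T ≤ t ∧ x₁ t = 0) ∧ (∀ T : ℝ, ∃ t, T ≤ t ∧ x₂ t = 0) := by
  have h₁₂ := zeros_of_zeros n₁ f₁ lam₁ a₁ ha₁
    (fun t ht u => (hsign₁ t ht u).trans (le_abs_self _)) x₁ x₂ t₀ ht₀ hsmooth₁ heq₁
  have h₂₁ := zeros_of_zeros n₂ f₂ lam₂ a₂ ha₂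
    (fun t ht u => (hsign₂ t ht u).trans (neg_le_abs _)) x₂ x₁ t₀ ht₀ hsmooth₂ heq₂
  exact hweak.elim (fun h => ⟨h, h₁₂ h⟩) (fun h => ⟨h₂₁ h, h⟩)
end

section
/- Every proper solution of the system x_1''(t) = t^2·|x_2(t)|^2·sign x_2(t), x_2''(t) = −t^4·|x_1(t)|^3·sign x_1(t) on [0,∞) is oscillating. -/
/-!
Write `F t s = t² |s|² sign s` and `G t s = t⁴ |s|³ sign s`, so the system is `x₁'' = F t x₂`,
`x₂'' = -G t x₁`. For `t ≥ 1` both nonlinearities are odd in `s`, have the sign of `s`, and are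
bounded away from zero when `s` is (`Restoring`). These properties alone imply that for
`u'' = F t v`, `v'' = -G t u` the component `u` cannot be positive on a half-line
(`not_eventually_pos`). Indeed `v` would then be concave, and there are three cases.

* `v'` is negative somewhere. Then `v → -∞`, so `u''` is eventually below a negative constant
  and `u → -∞`.
* `v' ≥ 0` and `v ≤ 0` throughout. Then `u` is concave and positive, hence nondecreasing, hence
  bounded below by a positive constant, so `v''` is below a negative constant and `v' → -∞`.
* `v' ≥ 0` throughout and `v` is positive somewhere. Then `v` is bounded below by a positive
  constant, so `u → ∞`, and again `v' → -∞`.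

Each case is contradictory. By oddness `u` cannot be negative on a half-line either, so it has
arbitrarily large zeros by the intermediate value theorem (`exists_zero`). The pair `(x₂, -x₁)`
satisfies the system of the same form with `F` and `G` exchanged, so the same statement gives the
zeros of `x₂`.
-/

open MeasureTheory Set Filter

/-- The properties of a nonlinearity `F t s` which the oscillation argument uses: it is odd in `s`,
and where `s` is above a given positive constant it is itself above a positive constant, the same
one for all `t ≥ 1`. -/
structure Restoring (F : ℝ → ℝ → ℝ) : Prop where
  odd : ∀ t s, F t (-s) = -F t s
  lower : ∀ c > 0, ∃ d > 0, ∀ t ≥ 1, ∀ s ≥ c, d ≤ F t s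

namespace Restoring

variable {F : ℝ → ℝ → ℝ}

lemma nonneg (hF : Restoring F) {t s : ℝ} (ht : 1 ≤ t) (hs : 0 ≤ s) : 0 ≤ F t s := by
  rcases hs.eq_or_lt with rfl | hs
  · have := hF.odd t 0
    rw [neg_zero] at this
    linarith
  · obtain ⟨d, hd, h⟩ := hF.lower s hs
    exact hd.le.trans (h t ht s le_rfl)

lemma nonpos (hF : Restoring F) {t s : ℝ} (ht : 1 ≤ t) (hs : s ≤ 0) : F t s ≤ 0 := by
  have := hF.nonneg ht (neg_nonneg.2 hs)
  rw [hF.odd] at this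
  linarith

end Restoring

lemma restoring_pow (m n : ℕ) : Restoring fun t s => t ^ m * |s| ^ n * Real.sign s where
  odd t s := by simp [Real.sign_neg]
  lower c hc := by
    refine ⟨c ^ n, by positivity, fun t ht s hs => ?_⟩
    have hs0 : 0 < s := hc.trans_le hs
    rw [Real.sign_of_pos hs0, abs_of_pos hs0, mul_one]
    calc c ^ n ≤ s ^ n := pow_le_pow_left₀ hc.le hs n
      _ ≤ t ^ m * s ^ n := le_mul_of_one_le_left (by positivity) (one_le_pow₀ ht)

lemma le_of_deriv_nonneg {h h' : ℝ → ℝ} {T : ℝ} (hd : ∀ t ≥ T, HasDerivAt h (h' t) t)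
    (hn : ∀ t ≥ T, 0 ≤ h' t) {a b : ℝ} (ha : T ≤ a) (hab : a ≤ b) : h a ≤ h b := by
  refine monotoneOn_of_hasDerivWithinAt_nonneg (D := Ici T) (f' := h') (convex_Ici T)
    (fun t ht => (hd t ht).continuousAt.continuousWithinAt) (fun t ht => ?_) (fun t ht => ?_)
    ha (ha.trans hab) hab
  · exact (hd t (interior_subset ht)).hasDerivWithinAt
  · exact hn t (interior_subset ht)

lemma le_of_deriv_nonpos {h h' : ℝ → ℝ} {T : ℝ} (hd : ∀ t ≥ T, HasDerivAt h (h' t) t)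
    (hn : ∀ t ≥ T, h' t ≤ 0) {a b : ℝ} (ha : T ≤ a) (hab : a ≤ b) : h b ≤ h a := by
  have := le_of_deriv_nonneg (h := fun t => -h t) (h' := fun t => -h' t)
    (fun t ht => (hd t ht).fun_neg) (fun t ht => neg_nonneg.2 (hn t ht)) ha hab
  linarith

lemma tendsto_atTop_of_deriv {h h' : ℝ → ℝ} {T c : ℝ} (hd : ∀ t ≥ T, HasDerivAt h (h' t) t)
    (hc : 0 < c) (hn : ∀ t ≥ T, c ≤ h' t) : Tendsto h atTop atTop := by
  have key : ∀ t ≥ T, h T - c * T + c * t ≤ h t := by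
    intro t ht
    have := le_of_deriv_nonneg (h := fun t => h t - c * t) (h' := fun t => h' t - c * 1)
      (fun s hs => (hd s hs).sub ((hasDerivAt_id s).const_mul c))
      (fun s hs => by have := hn s hs; linarith) le_rfl ht
    linarith
  refine tendsto_atTop_mono' atTop ((eventually_ge_atTop T).mono key) ?_
  exact tendsto_atTop_add_const_left _ _ (tendsto_id.const_mul_atTop hc)

lemma tendsto_atBot_of_deriv {h h' : ℝ → ℝ} {T c : ℝ} (hd : ∀ t ≥ T, HasDerivAt h (h' t) t)
    (hc : 0 < c) (hn : ∀ t ≥ T, h' t ≤ -c) : Tendsto h atTop atBot :=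
  tendsto_neg_atTop_iff.1 <| tendsto_atTop_of_deriv (h := fun t => -h t) (h' := fun t => -h' t)
    (fun t ht => (hd t ht).fun_neg) hc (fun t ht => le_neg.1 (hn t ht))

/-- If `f → ∞` then `f ≥ 1` on a half-line contained in `[T, ∞)`. -/
lemma exists_one_le {f : ℝ → ℝ} (hf : Tendsto f atTop atTop) (T : ℝ) :
    ∃ S ≥ T, ∀ t ≥ S, 1 ≤ f t := by
  obtain ⟨S, hS⟩ := eventually_atTop.1 (hf.eventually_ge_atTop 1)
  exact ⟨max T S, le_max_left _ _, fun t ht => hS t ((le_max_right _ _).trans ht)⟩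

/-- If `f → -∞` then `f` is negative somewhere on `[T, ∞)`. -/
lemma exists_neg {f : ℝ → ℝ} (hf : Tendsto f atTop atBot) (T : ℝ) : ∃ t ≥ T, f t < 0 := by
  obtain ⟨t, h1, h2⟩ := ((eventually_ge_atTop T).and (hf.eventually_lt_atBot 0)).exists
  exact ⟨t, h1, h2⟩

section

variable {F G : ℝ → ℝ → ℝ} {u u' v v' : ℝ → ℝ} {T : ℝ}

/-- The component `u` is not positive on a half-line; the three cases of the proof depend on
whether the nonincreasing function `v'` becomes negative and, if not, whether `v` becomes
positive. -/
lemma not_eventually_pos (hF : Restoring F) (hG : Restoring G) (hT : 1 ≤ T)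
    (hu : ∀ t ≥ T, HasDerivAt u (u' t) t) (hu' : ∀ t ≥ T, HasDerivAt u' (F t (v t)) t)
    (hv : ∀ t ≥ T, HasDerivAt v (v' t) t) (hv' : ∀ t ≥ T, HasDerivAt v' (-G t (u t)) t)
    (hpos : ∀ t ≥ T, 0 < u t) : False := by
  by_cases h1 : ∃ a ≥ T, v' a < 0
  · obtain ⟨a, ha, hva⟩ := h1
    have hanti : ∀ t ≥ a, v' t ≤ v' a := fun t ht =>
      le_of_deriv_nonpos hv' (fun s hs =>
        neg_nonpos.2 (hG.nonneg (hT.trans hs) (hpos s hs).le)) ha ht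
    have hvlim : Tendsto v atTop atBot :=
      tendsto_atBot_of_deriv (c := -v' a) (fun t ht => hv t (ha.trans ht)) (by linarith)
        (fun t ht => by have := hanti t ht; linarith)
    obtain ⟨S, hS, hvS⟩ := exists_one_le (tendsto_neg_atTop_iff.2 hvlim) T
    obtain ⟨d, hd, hFd⟩ := hF.lower 1 one_pos
    have hu'lim : Tendsto u' atTop atBot :=
      tendsto_atBot_of_deriv (fun t ht => hu' t (hS.trans ht)) hd (fun t ht => by
        have := hFd t (hT.trans (hS.trans ht)) (-v t) (hvS t ht)
        rw [hF.odd] at this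
        linarith)
    obtain ⟨R, hR, huR⟩ := exists_one_le (tendsto_neg_atTop_iff.2 hu'lim) T
    have hulim : Tendsto u atTop atBot :=
      tendsto_atBot_of_deriv (fun t ht => hu t (hR.trans ht)) one_pos
        (fun t ht => le_neg.1 (huR t ht))
    obtain ⟨t, ht, hut⟩ := exists_neg hulim T
    exact hut.not_gt (hpos t ht)
  · push Not at h1
    -- In both remaining cases `u` is bounded below by a positive constant, which drives `v'`
    -- to `-∞`.
    have finish : ∀ S ≥ T, ∀ c > 0, (∀ t ≥ S, c ≤ u t) → False := by
      intro S hS c hc huc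
      obtain ⟨d, hd, hGd⟩ := hG.lower c hc
      have hv'lim : Tendsto v' atTop atBot :=
        tendsto_atBot_of_deriv (fun t ht => hv' t (hS.trans ht)) hd
          (fun t ht => neg_le_neg (hGd t (hT.trans (hS.trans ht)) _ (huc t ht)))
      obtain ⟨t, ht, hvt⟩ := exists_neg hv'lim T
      exact hvt.not_ge (h1 t ht)
    by_cases h2 : ∃ a ≥ T, 0 < v a
    · obtain ⟨a, ha, hva⟩ := h2
      have hvmono : ∀ t ≥ a, v a ≤ v t := fun t ht => le_of_deriv_nonneg hv h1 ha ht
      obtain ⟨d, hd, hFd⟩ := hF.lower (v a) hva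
      have hu'lim : Tendsto u' atTop atTop :=
        tendsto_atTop_of_deriv (fun t ht => hu' t (ha.trans ht)) hd
          (fun t ht => hFd t (hT.trans (ha.trans ht)) _ (hvmono t ht))
      obtain ⟨R, hR, huR⟩ := exists_one_le hu'lim T
      obtain ⟨S, hS, huS⟩ := exists_one_le
        (tendsto_atTop_of_deriv (fun t ht => hu t (hR.trans ht)) one_pos huR) T
      exact finish S hS 1 one_pos huS
    · push Not at h2
      have hu'nonneg : ∀ t ≥ T, 0 ≤ u' t := by
        by_contra! hneg
        obtain ⟨a, ha, hua⟩ := hneg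
        have hanti : ∀ t ≥ a, u' t ≤ u' a := fun t ht =>
          le_of_deriv_nonpos hu' (fun s hs => hF.nonpos (hT.trans hs) (h2 s hs)) ha ht
        have hulim : Tendsto u atTop atBot :=
          tendsto_atBot_of_deriv (c := -u' a) (fun t ht => hu t (ha.trans ht)) (by linarith)
            (fun t ht => by have := hanti t ht; linarith)
        obtain ⟨t, ht, hut⟩ := exists_neg hulim T
        exact hut.not_gt (hpos t ht)
      exact finish T le_rfl (u T) (hpos T le_rfl)
        (fun t ht => le_of_deriv_nonneg hu hu'nonneg le_rfl ht)

lemma exists_zero (hF : Restoring F) (hG : Restoring G) (hT : 1 ≤ T)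
    (hu : ∀ t ≥ T, HasDerivAt u (u' t) t) (hu' : ∀ t ≥ T, HasDerivAt u' (F t (v t)) t)
    (hv : ∀ t ≥ T, HasDerivAt v (v' t) t) (hv' : ∀ t ≥ T, HasDerivAt v' (-G t (u t)) t) :
    ∃ t ≥ T, u t = 0 := by
  have hcont : ContinuousOn u (Ici T) :=
    fun t ht => (hu t ht).continuousAt.continuousWithinAt
  obtain ⟨a, ha, hua⟩ : ∃ a ≥ T, u a ≤ 0 := by
    by_contra! hpos
    exact not_eventually_pos hF hG hT hu hu' hv hv' hpos
  obtain ⟨b, hb, hub⟩ : ∃ b ≥ T, 0 ≤ u b := by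
    by_contra! hneg
    refine not_eventually_pos (u := fun t => -u t) (u' := fun t => -u' t) (v := fun t => -v t)
      (v' := fun t => -v' t) hF hG hT (fun t ht => (hu t ht).fun_neg) (fun t ht => ?_)
      (fun t ht => (hv t ht).fun_neg) (fun t ht => ?_) (fun t ht => neg_pos.2 (hneg t ht))
    · rw [hF.odd]
      exact (hu' t ht).fun_neg
    · rw [hG.odd]
      exact (hv' t ht).fun_neg
  obtain ⟨t, ht, hut⟩ := isPreconnected_Ici.intermediate_value (s := Ici T) ha hb hcont
    (show (0 : ℝ) ∈ Icc (u a) (u b) from ⟨hua, hub⟩)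
  exact ⟨t, ht, hut⟩

end

/-- Example, first case. Every proper solution of the system
`x₁'' = t²·|x₂|²·sign x₂`, `x₂'' = −t⁴·|x₁|³·sign x₁` on `[0, ∞)` is oscillating. -/
theorem example_system_polynomial_oscillates
    (x₁ x₂ : ℝ → ℝ) (t₀ : ℝ) (ht₀ : 0 ≤ t₀)
    (hd₁ : ∀ t ∈ Ici t₀, DifferentiableAt ℝ x₁ t ∧ DifferentiableAt ℝ (deriv x₁) t)
    (hd₂ : ∀ t ∈ Ici t₀, DifferentiableAt ℝ x₂ t ∧ DifferentiableAt ℝ (deriv x₂) t)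
    (heq₁ : ∀ t ∈ Ici t₀, deriv (deriv x₁) t = t ^ 2 * |x₂ t| ^ 2 * Real.sign (x₂ t))
    (heq₂ : ∀ t ∈ Ici t₀, deriv (deriv x₂) t = -(t ^ 4 * |x₁ t| ^ 3 * Real.sign (x₁ t)))
    (hproper : ∀ t ∈ Ici t₀, ∃ τ, t ≤ τ ∧ 0 < |x₁ τ| + |x₂ τ|) :
    (∀ T : ℝ, ∃ t, T ≤ t ∧ x₁ t = 0) ∧ (∀ T : ℝ, ∃ t, T ≤ t ∧ x₂ t = 0) := by
  have h₁ : ∀ t ≥ t₀, HasDerivAt x₁ (deriv x₁ t) t := fun t ht => (hd₁ t ht).1.hasDerivAt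
  have h₂ : ∀ t ≥ t₀, HasDerivAt x₂ (deriv x₂ t) t := fun t ht => (hd₂ t ht).1.hasDerivAt
  have h₁' : ∀ t ≥ t₀, HasDerivAt (deriv x₁) (t ^ 2 * |x₂ t| ^ 2 * Real.sign (x₂ t)) t :=
    fun t ht => heq₁ t ht ▸ (hd₁ t ht).2.hasDerivAt
  have h₂' : ∀ t ≥ t₀, HasDerivAt (deriv x₂) (-(t ^ 4 * |x₁ t| ^ 3 * Real.sign (x₁ t))) t :=
    fun t ht => heq₂ t ht ▸ (hd₂ t ht).2.hasDerivAt
  have hF := restoring_pow 2 2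
  have hG := restoring_pow 4 3
  refine ⟨fun T => ?_, fun T => ?_⟩
  all_goals
    have hT₁ : 1 ≤ max T (max t₀ 1) := by simp
    have hT₀ : ∀ t ≥ max T (max t₀ 1), t₀ ≤ t := fun t ht => by
      simp only [ge_iff_le, max_le_iff] at ht
      exact ht.2.1
  · obtain ⟨t, ht, h0⟩ := exists_zero (u := x₁) (v := x₂) hF hG hT₁
      (fun t ht => h₁ t (hT₀ t ht)) (fun t ht => h₁' t (hT₀ t ht))
      (fun t ht => h₂ t (hT₀ t ht)) (fun t ht => h₂' t (hT₀ t ht))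
    exact ⟨t, (le_max_left _ _).trans ht, h0⟩
  · obtain ⟨t, ht, h0⟩ := exists_zero (u := x₂) (v := fun t => -x₁ t)
      (v' := fun t => -deriv x₁ t) hG hF hT₁
      (fun t ht => h₂ t (hT₀ t ht))
      (fun t ht => by
        rw [hG.odd]
        exact h₂' t (hT₀ t ht))
      (fun t ht => (h₁ t (hT₀ t ht)).fun_neg) (fun t ht => (h₁' t (hT₀ t ht)).fun_neg)
    exact ⟨t, (le_max_left _ _).trans ht, h0⟩
end
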